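/- Let A ⊆ B(H) and B ⊆ B(K) be unital operator algebras and let T : A → B be a linear map with T(1) = 1 and ‖T(a)‖ ≤ ‖a‖ for all a ∈ A (a unital contraction). Then T is real positive: if a ∈ A satisfies a + a* ≥ 0 in B(H), then T(a) + T(a)* ≥ 0 in B(K). -/

import Mathlib

set_option maxHeartbeats 1000000
set_option synthInstance.maxHeartbeats 1000000

open ContinuousLinearMap

/-!
Real positivity is read off from the norm near the identity. If `Re ⟪a x, x⟫ ≥ 0` for all `x`, then
expanding `‖x - t a x‖²` gives `‖1 - t a‖² ≤ 1 + t² ‖a‖²` for every `t ≥ 0`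
(`norm_one_sub_smul_le_of_accretive`). A unital contraction `T` preserves this bound:
`‖1 - t T a‖² ≤ 1 + t² ‖a‖²`. Expanding `‖y - t T a y‖²` now gives
`2 Re ⟪T a y, y⟫ ≥ -t ‖a‖² ‖y‖²` for all `t > 0`, and `t → 0` yields `Re ⟪T a y, y⟫ ≥ 0`
(`re_inner_nonneg_of_norm_one_sub_smul_le`).
-/

section

variable {E : Type*} [NormedAddCommGroup E] [InnerProductSpace ℂ E]

lemma isPositive_add_adjoint_iff [CompleteSpace E] (S : E →L[ℂ] E) :
    (S + adjoint S).IsPositive ↔ ∀ x, 0 ≤ (inner ℂ (S x) x).re := by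
  have key : ∀ x, (S + adjoint S).reApplyInnerSelf x = 2 * (inner ℂ (S x) x).re := by
    intro x
    have h : (inner ℂ x (S x)).re = (inner ℂ (S x) x).re := inner_re_symm (𝕜 := ℂ) x (S x)
    simp only [reApplyInnerSelf_apply, add_apply, inner_add_left, adjoint_inner_left,
      RCLike.re_to_complex, Complex.add_re, h]
    ring
  rw [isPositive_def']
  constructor
  · intro h x
    have := h.2 x
    rw [key] at this
    linarith
  · intro h
    refine ⟨IsSelfAdjoint.add_star_self S, fun x => ?_⟩
    rw [key]
    linarith [h x]

lemma norm_sq_one_sub_smul_apply (S : E →L[ℂ] E) (t : ℝ) (x : E) :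
    ‖(1 - (t : ℂ) • S) x‖ ^ 2
      = ‖x‖ ^ 2 - 2 * t * (inner ℂ (S x) x).re + t ^ 2 * ‖S x‖ ^ 2 := by
  have h : (inner ℂ x (S x)).re = (inner ℂ (S x) x).re := inner_re_symm (𝕜 := ℂ) x (S x)
  have h2 := norm_sub_sq (𝕜 := ℂ) x ((t : ℂ) • S x)
  rw [inner_smul_right, norm_smul, RCLike.re_to_complex, Complex.re_ofReal_mul, h, mul_pow,
    Complex.norm_real, Real.norm_eq_abs, sq_abs] at h2
  rw [sub_apply, smul_apply, one_apply_eq_self]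
  rw [h2]
  ring

lemma norm_one_sub_smul_le_of_accretive (S : E →L[ℂ] E)
    (hS : ∀ x, 0 ≤ (inner ℂ (S x) x).re) {t : ℝ} (ht : 0 ≤ t) :
    ‖1 - (t : ℂ) • S‖ ≤ √(1 + t ^ 2 * ‖S‖ ^ 2) := by
  refine opNorm_le_bound _ (Real.sqrt_nonneg _) fun x => ?_
  refine le_of_sq_le_sq ?_ (by positivity)
  rw [norm_sq_one_sub_smul_apply, mul_pow, Real.sq_sqrt (by positivity)]
  have h1 : ‖S x‖ ^ 2 ≤ (‖S‖ * ‖x‖) ^ 2 := by gcongr; exact S.le_opNorm x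
  have h2 := mul_nonneg ht (hS x)
  have h3 := mul_le_mul_of_nonneg_left h1 (sq_nonneg t)
  nlinarith

/-- A first-order converse to `norm_one_sub_smul_le_of_accretive`: a bound on `‖1 - t S‖²` of the
form `1 + O(t²)` as `t ↓ 0` forces `S` to be accretive. -/
lemma re_inner_nonneg_of_norm_one_sub_smul_le (S : E →L[ℂ] E) (c : ℝ)
    (hS : ∀ t : ℝ, 0 < t → ‖1 - (t : ℂ) • S‖ ≤ √(1 + t ^ 2 * c ^ 2)) (y : E) :
    0 ≤ (inner ℂ (S y) y).re := by
  have key : ∀ t : ℝ, 0 < t → -(inner ℂ (S y) y).re * 2 ≤ t * (c ^ 2 * ‖y‖ ^ 2) := by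
    intro t ht
    have h1 : ‖(1 - (t : ℂ) • S) y‖ ^ 2 ≤ (√(1 + t ^ 2 * c ^ 2) * ‖y‖) ^ 2 := by
      gcongr
      exact le_of_opNorm_le _ (hS t ht) y
    rw [norm_sq_one_sub_smul_apply, mul_pow, Real.sq_sqrt (by positivity)] at h1
    have h2 : 0 ≤ t ^ 2 * ‖S y‖ ^ 2 := by positivity
    refine le_of_mul_le_mul_left ?_ ht
    nlinarith
  by_contra! hneg
  -- The chosen `t` makes the right-hand side of `key` less than `-Re ⟪S y, y⟫`;
  -- the added `1` avoids a division by zero.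
  have hM : 0 ≤ c ^ 2 * ‖y‖ ^ 2 := by positivity
  generalize c ^ 2 * ‖y‖ ^ 2 = M at key hM
  have h := key (-(inner ℂ (S y) y).re / (M + 1)) (div_pos (by linarith) (by linarith))
  rw [div_mul_eq_mul_div, le_div_iff₀ (by linarith)] at h
  nlinarith

end

/-- A unital contraction between unital operator algebras is real positive. -/
theorem stmt_4 {H K : Type*} [NormedAddCommGroup H] [InnerProductSpace ℂ H] [CompleteSpace H]
    [NormedAddCommGroup K] [InnerProductSpace ℂ K] [CompleteSpace K]
    (A : Subalgebra ℂ (H →L[ℂ] H)) (hA : IsClosed (A : Set (H →L[ℂ] H)))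
    (B : Subalgebra ℂ (K →L[ℂ] K)) (hB : IsClosed (B : Set (K →L[ℂ] K)))
    (T : A →ₗ[ℂ] B) (hT1 : T 1 = 1)
    (hTc : ∀ a : A, ‖(T a : K →L[ℂ] K)‖ ≤ ‖(a : H →L[ℂ] H)‖) :
    ∀ a : A, ((a : H →L[ℂ] H) + adjoint (a : H →L[ℂ] H)).IsPositive →
      ((T a : K →L[ℂ] K) + adjoint (T a : K →L[ℂ] K)).IsPositive := by
  intro a ha
  rw [isPositive_add_adjoint_iff] at ha ⊢
  refine re_inner_nonneg_of_norm_one_sub_smul_le _ ‖(a : H →L[ℂ] H)‖ fun t ht => ?_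
  have h := hTc (1 - (t : ℂ) • a)
  rw [map_sub, map_smul, hT1] at h
  exact h.trans (norm_one_sub_smul_le_of_accretive _ ha ht.le)
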